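/- In the Zorn vector matrix algebra over the field F₂ with two elements, the triple (a, b, c) with a = [[0,(1,0,0)],[(1,0,0),1]], b = [[0,(0,1,0)],[(0,1,0),0]], c = [[0,(0,0,1)],[(0,0,1),0]] consists of elements of norm 1, satisfies ⟨b,1⟩ = ⟨c,1⟩ = ⟨a,b⟩ = ⟨a,c⟩ = ⟨b,c⟩ = ⟨ab,c⟩ = 0 and ⟨a,1⟩ ≠ 0, and the set {1, a, b, ab, c, ac, bc, (ab)c} is a basis of the algebra as an F₂-vector space. -/

import Mathlib

/-- Zorn vector matrices `[[a, α], [β, b]]` over a field `k`. -/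
@[ext]
structure Zorn (k : Type*) where
  a : k
  α : Fin 3 → k
  β : Fin 3 → k
  b : k

namespace Zorn

variable {k : Type*} [Field k]

/-- Dot product on `k³`. -/
def dot (u v : Fin 3 → k) : k := u 0 * v 0 + u 1 * v 1 + u 2 * v 2

/-- Cross product on `k³`. -/
def cross (u v : Fin 3 → k) : Fin 3 → k :=
  ![u 1 * v 2 - u 2 * v 1, u 2 * v 0 - u 0 * v 2, u 0 * v 1 - u 1 * v 0]

/-- Zorn vector matrix multiplication. -/
instance : Mul (Zorn k) :=
  ⟨fun x y =>
    ⟨x.a * y.a + dot x.α y.β,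
     fun i => x.a * y.α i + y.b * x.α i - cross x.β y.β i,
     fun i => y.a * x.β i + x.b * y.β i + cross x.α y.α i,
     dot x.β y.α + x.b * y.b⟩⟩

instance : One (Zorn k) := ⟨⟨1, 0, 0, 1⟩⟩
instance : Zero (Zorn k) := ⟨⟨0, 0, 0, 0⟩⟩
instance : Add (Zorn k) := ⟨fun x y => ⟨x.a + y.a, x.α + y.α, x.β + y.β, x.b + y.b⟩⟩
instance : Neg (Zorn k) := ⟨fun x => ⟨-x.a, -x.α, -x.β, -x.b⟩⟩
instance : SMul k (Zorn k) := ⟨fun c x => ⟨c * x.a, c • x.α, c • x.β, c * x.b⟩⟩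

/-- The norm (determinant) of a Zorn vector matrix. -/
def N (x : Zorn k) : k := x.a * x.b - dot x.α x.β

/-- The bilinear form associated with the norm. -/
def polarN (x y : Zorn k) : k := N (x + y) - N x - N y


@[simp] theorem add_a' (x y : Zorn k) : (x + y).a = x.a + y.a := rfl
@[simp] theorem add_alpha' (x y : Zorn k) : (x + y).α = x.α + y.α := rfl
@[simp] theorem add_beta' (x y : Zorn k) : (x + y).β = x.β + y.β := rfl
@[simp] theorem add_b' (x y : Zorn k) : (x + y).b = x.b + y.b := rfl
@[simp] theorem neg_a' (x : Zorn k) : (-x).a = -x.a := rfl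
@[simp] theorem neg_alpha' (x : Zorn k) : (-x).α = -x.α := rfl
@[simp] theorem neg_beta' (x : Zorn k) : (-x).β = -x.β := rfl
@[simp] theorem neg_b' (x : Zorn k) : (-x).b = -x.b := rfl
@[simp] theorem zero_a' : (0 : Zorn k).a = 0 := rfl
@[simp] theorem zero_alpha' : (0 : Zorn k).α = 0 := rfl
@[simp] theorem zero_beta' : (0 : Zorn k).β = 0 := rfl
@[simp] theorem zero_b' : (0 : Zorn k).b = 0 := rfl
@[simp] theorem smul_a' (c : k) (x : Zorn k) : (c • x).a = c * x.a := rfl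
@[simp] theorem smul_alpha' (c : k) (x : Zorn k) : (c • x).α = c • x.α := rfl
@[simp] theorem smul_beta' (c : k) (x : Zorn k) : (c • x).β = c • x.β := rfl
@[simp] theorem smul_b' (c : k) (x : Zorn k) : (c • x).b = c * x.b := rfl

instance : AddCommGroup (Zorn k) where
  add := (· + ·)
  zero := 0
  neg := Neg.neg
  add_assoc x y z := by
    show Zorn.mk _ _ _ _ = Zorn.mk _ _ _ _
    ext i <;> simp <;> ring
  zero_add x := by
    show Zorn.mk _ _ _ _ = x
    ext i <;> simp
  add_zero x := by
    show Zorn.mk _ _ _ _ = x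
    ext i <;> simp
  add_comm x y := by
    show Zorn.mk _ _ _ _ = Zorn.mk _ _ _ _
    ext i <;> simp <;> ring
  neg_add_cancel x := by
    show Zorn.mk _ _ _ _ = Zorn.mk _ _ _ _
    ext i <;> simp
  nsmul := nsmulRec
  zsmul := zsmulRec

instance : Module k (Zorn k) where
  smul := (· • ·)
  one_smul x := by
    show Zorn.mk _ _ _ _ = x
    ext i <;> simp
  mul_smul c d x := by
    show Zorn.mk _ _ _ _ = Zorn.mk _ _ _ _
    ext i <;> simp <;> ring
  smul_zero c := by
    show Zorn.mk _ _ _ _ = Zorn.mk _ _ _ _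
    ext i <;> simp
  smul_add c x y := by
    show Zorn.mk _ _ _ _ = Zorn.mk _ _ _ _
    ext i <;> simp <;> ring
  add_smul c d x := by
    show Zorn.mk _ _ _ _ = Zorn.mk _ _ _ _
    ext i <;> simp <;> ring
  zero_smul x := by
    show Zorn.mk _ _ _ _ = Zorn.mk _ _ _ _
    ext i <;> simp

end Zorn

/-!
A composition form satisfies `⟨xz, yz⟩ = ⟨x, y⟩ Q z`, and polarizing once more gives
`⟨xy, zw⟩ + ⟨xw, zy⟩ = ⟨x, z⟩⟨y, w⟩`. Hence, if a family `v` is orthogonal to its right translate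
`v * c`, the Gram matrix of the doubled family `v, v * c` is block diagonal with blocks `G` and
`Q c • G`, where `G` is the Gram matrix of `v`. Starting from `1, a`, whose Gram determinant is
`4 Q a - ⟨a, 1⟩ ^ 2`, and doubling by `b` and then by `c` shows that the eight products are linearly
independent. The second doubling needs only a few orthogonality relations, the others being
consequences of the polarized identity.
-/

open QuadraticMap nonZeroDivisors

section Gram

variable {R M ι : Type*} [CommRing R] [AddCommGroup M] [Module R M]

/-- The Gram matrix of a family of vectors with respect to a bilinear form; `Matrix.gram` is only
available for inner products. -/
def bilinGram (B : LinearMap.BilinForm R M) (v : ι → M) : Matrix ι ι R :=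
  Matrix.of fun i j => B (v i) (v j)

theorem bilinGram_mulVec [Fintype ι] (B : LinearMap.BilinForm R M) (v : ι → M) (g : ι → R)
    (i : ι) : (bilinGram B v).mulVec g i = B (v i) (∑ j, g j • v j) := by
  simp [bilinGram, Matrix.mulVec, dotProduct, mul_comm]

theorem linearIndependent_of_det_bilinGram_mem_nonZeroDivisors [Fintype ι] [DecidableEq ι]
    {B : LinearMap.BilinForm R M} {v : ι → M} (hdet : (bilinGram B v).det ∈ R⁰) :
    LinearIndependent R v := by
  rw [Fintype.linearIndependent_iff]
  intro g hg
  have hker : (bilinGram B v).mulVec g = 0 := by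
    ext i
    rw [bilinGram_mulVec, hg, map_zero, Pi.zero_apply]
  exact congrFun (Matrix.eq_zero_of_det_mem_nonZeroDivisors_of_mulVec_eq_zero hdet hker)

end Gram

/-- A quadratic form permitting composition on a nonassociative unital algebra, the abstract
counterpart of the norm of the Zorn algebra. -/
structure IsCompositionForm {R A : Type*} [CommRing R] [NonAssocRing A] [Module R A]
    (Q : QuadraticForm R A) : Prop where
  map_one : Q 1 = 1
  map_mul (x y : A) : Q (x * y) = Q x * Q y

/-- The family `v, v * c` spanning the Cayley–Dickson double of the span of `v`. -/
def doubledFamily {A ι : Type*} [Mul A] (v : ι → A) (c : A) : ι ⊕ ι → A :=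
  Sum.elim v fun i => v i * c

namespace IsCompositionForm

variable {R A ι : Type*} [CommRing R] [NonAssocRing A] [Module R A] {Q : QuadraticForm R A}

theorem polar_mul_right_mul_right (hQ : IsCompositionForm Q) (x y z : A) :
    polar Q (x * z) (y * z) = polar Q x y * Q z := by
  simp only [polar, ← add_mul, hQ.map_mul, sub_mul]

theorem polar_mul_left_mul_left (hQ : IsCompositionForm Q) (x y z : A) :
    polar Q (x * y) (x * z) = Q x * polar Q y z := by
  simp only [polar, ← mul_add, hQ.map_mul, mul_sub]

theorem polar_mul_mul_add_swap (hQ : IsCompositionForm Q) (x y z w : A) :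
    polar Q (x * y) (z * w) + polar Q (x * w) (z * y) = polar Q x z * polar Q y w := by
  have hsum := hQ.polar_mul_left_mul_left (x + z) y w
  simp only [add_mul, polar_add_left, polar_add_right, hQ.polar_mul_left_mul_left] at hsum
  have hadd : Q (x + z) = Q x + Q z + polar Q x z := by rw [polar]; ring
  rw [hadd, polar_comm Q (z * y)] at hsum
  linear_combination hsum

theorem polar_mul_right_eq_neg (hQ : IsCompositionForm Q) {c : A} (hc : polar Q c 1 = 0)
    (x y : A) : polar Q x (y * c) = -polar Q (x * c) y := by
  have hswap := hQ.polar_mul_mul_add_swap x 1 y c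
  rw [mul_one, mul_one, polar_comm Q 1 c, hc, mul_zero] at hswap
  exact eq_neg_of_add_eq_zero_left hswap

theorem polar_mul_mul_eq_neg_swap (hQ : IsCompositionForm Q) {b c : A} (hbc : polar Q b c = 0)
    (x y : A) : polar Q (x * b) (y * c) = -polar Q (x * c) (y * b) := by
  have hswap := hQ.polar_mul_mul_add_swap x b y c
  rw [hbc, mul_zero] at hswap
  exact eq_neg_of_add_eq_zero_left hswap

theorem polar_mul_mul_self (hQ : IsCompositionForm Q) {b : A} (hb : polar Q b 1 = 0) (x y : A) :
    polar Q (x * b * b) y = -(polar Q x y * Q b) := by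
  rw [← hQ.polar_mul_right_mul_right, hQ.polar_mul_right_eq_neg hb, neg_neg]

theorem bilinGram_doubledFamily (hQ : IsCompositionForm Q) {v : ι → A} {c : A}
    (horth : ∀ i j, polar Q (v i) (v j * c) = 0) :
    bilinGram Q.polarBilin (doubledFamily v c) =
      Matrix.fromBlocks (bilinGram Q.polarBilin v) 0 0 (Q c • bilinGram Q.polarBilin v) := by
  ext (i | i) (j | j)
  · rfl
  · exact horth i j
  · exact (polar_comm Q _ _).trans (horth j i)
  · exact (hQ.polar_mul_right_mul_right _ _ _).trans (mul_comm _ _)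

theorem det_bilinGram_doubledFamily_mem_nonZeroDivisors [Fintype ι] [DecidableEq ι]
    (hQ : IsCompositionForm Q) {v : ι → A} {c : A} (horth : ∀ i j, polar Q (v i) (v j * c) = 0)
    (hc : Q c ∈ R⁰) (hdet : (bilinGram Q.polarBilin v).det ∈ R⁰) :
    (bilinGram Q.polarBilin (doubledFamily v c)).det ∈ R⁰ := by
  rw [hQ.bilinGram_doubledFamily horth, Matrix.det_fromBlocks_zero₂₁, Matrix.det_smul]
  exact mul_mem hdet (mul_mem (pow_mem hc _) hdet)

theorem polar_doubledFamily_mul_eq_zero (hQ : IsCompositionForm Q) {v : ι → A} {b c : A}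
    (hb : polar Q b 1 = 0) (hc : polar Q c 1 = 0) (hbc : polar Q b c = 0)
    (hv : ∀ i j, polar Q (v i) (v j * c) = 0) (hvb : ∀ i j, polar Q (v i * b) (v j * c) = 0) :
    ∀ i j, polar Q (doubledFamily v b i) (doubledFamily v b j * c) = 0 := by
  rintro (i | i) (j | j) <;> simp only [doubledFamily, Sum.elim_inl, Sum.elim_inr]
  · exact hv i j
  · rw [hQ.polar_mul_right_eq_neg hc, polar_comm, hvb, neg_zero]
  · exact hvb i j
  · rw [hQ.polar_mul_mul_eq_neg_swap hbc, polar_comm, hQ.polar_mul_mul_self hb, hv, zero_mul,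
      neg_zero, neg_zero]

theorem det_bilinGram_one_pair (hQ : IsCompositionForm Q) (a : A) :
    (bilinGram Q.polarBilin ![1, a]).det = 4 * Q a - polar Q a 1 ^ 2 := by
  simp only [Matrix.det_fin_two, bilinGram, Matrix.of_apply, Matrix.cons_val_zero,
    Matrix.cons_val_one, polarBilin_apply_apply, polar_self, hQ.map_one, polar_comm Q 1 a]
  ring

theorem polar_one_pair_mul_eq_zero (hQ : IsCompositionForm Q) {a c : A} (hc : polar Q c 1 = 0)
    (hac : polar Q a c = 0) (i j : Fin 2) :
    polar Q (![1, a] i) (![1, a] j * c) = 0 := by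
  have h_one_c : polar Q 1 c = 0 := by rwa [polar_comm]
  have h_one_ac : polar Q 1 (a * c) = 0 := by
    rw [hQ.polar_mul_right_eq_neg hc, one_mul, polar_comm, hac, neg_zero]
  have h_a_ac : polar Q a (a * c) = 0 := by
    simpa only [mul_one, h_one_c, mul_zero] using hQ.polar_mul_left_mul_left a 1 c
  fin_cases i <;> fin_cases j <;> simp [*]

theorem polar_one_pair_mul_mul_eq_zero (hQ : IsCompositionForm Q) {a b c : A}
    (hbc : polar Q b c = 0) (habc : polar Q (a * b) c = 0) (i j : Fin 2) :
    polar Q (![1, a] i * b) (![1, a] j * c) = 0 := by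
  have h_b_ac : polar Q b (a * c) = 0 := by
    simpa only [one_mul, polar_comm Q c, habc, neg_zero] using
      hQ.polar_mul_mul_eq_neg_swap hbc 1 a
  have h_ab_ac : polar Q (a * b) (a * c) = 0 := by
    rw [hQ.polar_mul_left_mul_left, hbc, mul_zero]
  fin_cases i <;> fin_cases j <;> simp [*]

theorem linearIndependent_doubling_triple (hQ : IsCompositionForm Q) {a b c : A}
    (hb : polar Q b 1 = 0) (hc : polar Q c 1 = 0) (hab : polar Q a b = 0) (hac : polar Q a c = 0)
    (hbc : polar Q b c = 0) (habc : polar Q (a * b) c = 0)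
    (hdisc : 4 * Q a - polar Q a 1 ^ 2 ∈ R⁰) (hQb : Q b ∈ R⁰) (hQc : Q c ∈ R⁰) :
    LinearIndependent R ![1, a, b, a * b, c, a * c, b * c, a * b * c] := by
  have hdet : (bilinGram Q.polarBilin ![1, a]).det ∈ R⁰ := by rwa [hQ.det_bilinGram_one_pair]
  have hdet_b := hQ.det_bilinGram_doubledFamily_mem_nonZeroDivisors
    (hQ.polar_one_pair_mul_eq_zero hb hab) hQb hdet
  have hdet_bc := hQ.det_bilinGram_doubledFamily_mem_nonZeroDivisors
    (hQ.polar_doubledFamily_mul_eq_zero hb hc hbc (hQ.polar_one_pair_mul_eq_zero hc hac)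
      (hQ.polar_one_pair_mul_mul_eq_zero hbc habc)) hQc hdet_b
  let e : (Fin 2 ⊕ Fin 2) ⊕ (Fin 2 ⊕ Fin 2) ≃ Fin 8 :=
    (finSumFinEquiv.sumCongr finSumFinEquiv).trans finSumFinEquiv
  have hfamily : ![1, a, b, a * b, c, a * c, b * c, a * b * c] ∘ e =
      doubledFamily (doubledFamily ![1, a] b) c := by
    ext ((i | i) | (i | i)) <;> fin_cases i
    exacts [rfl, rfl, (one_mul b).symm, rfl, (one_mul c).symm, rfl,
      congrArg (· * c) (one_mul b).symm, rfl]
  rw [← linearIndependent_equiv e, hfamily]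
  exact linearIndependent_of_det_bilinGram_mem_nonZeroDivisors hdet_bc

end IsCompositionForm

namespace Zorn

variable {k : Type*} [Field k]

theorem mul_a (x y : Zorn k) : (x * y).a = x.a * y.a + dot x.α y.β := rfl

theorem mul_alpha (x y : Zorn k) (i : Fin 3) :
    (x * y).α i = x.a * y.α i + y.b * x.α i - cross x.β y.β i := rfl

theorem mul_beta (x y : Zorn k) (i : Fin 3) :
    (x * y).β i = y.a * x.β i + x.b * y.β i + cross x.α y.α i := rfl

theorem mul_b (x y : Zorn k) : (x * y).b = dot x.β y.α + x.b * y.b := rfl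

theorem one_def : (1 : Zorn k) = ⟨1, 0, 0, 1⟩ := rfl

section NonAssocRing

/-- The Zorn algebra as a nonassociative ring. The instance is local, so that elsewhere the
operations on `Zorn k` are still found through the instances declared one by one above. -/
local instance nonAssocRing : NonAssocRing (Zorn k) where
  __ := (inferInstance : AddCommGroup (Zorn k))
  left_distrib x y z := by
    ext i <;> (try fin_cases i) <;>
      simp only [add_a', add_alpha', add_beta', add_b', Pi.add_apply, mul_a, mul_b, mul_alpha,
        mul_beta, dot, cross, Fin.zero_eta, Fin.mk_one, Fin.reduceFinMk, Matrix.cons_val] <;>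
      ring
  right_distrib x y z := by
    ext i <;> (try fin_cases i) <;>
      simp only [add_a', add_alpha', add_beta', add_b', Pi.add_apply, mul_a, mul_b, mul_alpha,
        mul_beta, dot, cross, Fin.zero_eta, Fin.mk_one, Fin.reduceFinMk, Matrix.cons_val] <;>
      ring
  zero_mul x := by
    ext i <;> (try fin_cases i) <;> simp [mul_a, mul_b, mul_alpha, mul_beta, dot, cross]
  mul_zero x := by
    ext i <;> (try fin_cases i) <;> simp [mul_a, mul_b, mul_alpha, mul_beta, dot, cross]
  one_mul x := by
    ext i <;> (try fin_cases i) <;> simp [mul_a, mul_b, mul_alpha, mul_beta, dot, cross, one_def]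
  mul_one x := by
    ext i <;> (try fin_cases i) <;> simp [mul_a, mul_b, mul_alpha, mul_beta, dot, cross, one_def]

theorem polarN_eq (x y : Zorn k) :
    polarN x y = x.a * y.b + y.a * x.b - dot x.α y.β - dot y.α x.β := by
  simp only [polarN, N, dot, add_a', add_alpha', add_beta', add_b', Pi.add_apply]
  ring

/-- The norm of the Zorn algebra as a quadratic form. -/
def normForm : QuadraticForm k (Zorn k) :=
  QuadraticMap.ofPolar N
    (fun c x => by
      simp only [N, dot, smul_a', smul_alpha', smul_beta', smul_b', Pi.smul_apply, smul_eq_mul]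
      ring)
    (fun x y z => by
      change polarN _ _ = polarN _ _ + polarN _ _
      simp only [polarN_eq, dot, add_a', add_alpha', add_beta', add_b', Pi.add_apply]
      ring)
    (fun c x y => by
      change polarN _ _ = c • polarN _ _
      simp only [polarN_eq, dot, smul_a', smul_alpha', smul_beta', smul_b', Pi.smul_apply,
        smul_eq_mul]
      ring)

theorem isCompositionForm_normForm : IsCompositionForm (normForm (k := k)) where
  map_one := by simp [normForm, N, dot, one_def]
  map_mul x y := by
    change N (x * y) = N x * N y
    simp only [N, mul_a, mul_b, mul_alpha, mul_beta, dot, cross, Matrix.cons_val]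
    ring

end NonAssocRing

/-- The four entries of a vector matrix, as a linear isomorphism. -/
def entriesEquiv : Zorn k ≃ₗ[k] k × (Fin 3 → k) × (Fin 3 → k) × k where
  toFun x := (x.a, x.α, x.β, x.b)
  invFun p := ⟨p.1, p.2.1, p.2.2.1, p.2.2.2⟩
  map_add' _ _ := rfl
  map_smul' _ _ := rfl

theorem finrank_eq_eight : Module.finrank k (Zorn k) = 8 := by
  simp [entriesEquiv.finrank_eq]

theorem doubling_triple_F2_general (h5 : (5 : k) ≠ 0) :
    let a : Zorn k := ⟨0, ![1, 0, 0], ![1, 0, 0], 1⟩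
    let b : Zorn k := ⟨0, ![0, 1, 0], ![0, 1, 0], 0⟩
    let c : Zorn k := ⟨0, ![0, 0, 1], ![0, 0, 1], 0⟩
    N a = -1 ∧ N b = -1 ∧ N c = -1 ∧
    polarN b 1 = 0 ∧ polarN c 1 = 0 ∧ polarN a b = 0 ∧ polarN a c = 0 ∧
    polarN b c = 0 ∧ polarN (a * b) c = 0 ∧ polarN a 1 ≠ 0 ∧
    (LinearIndependent k
        ![(1 : Zorn k), a, b, a * b, c, a * c, b * c, (a * b) * c] ∧
      Submodule.span k
        (Set.range ![(1 : Zorn k), a, b, a * b, c, a * c, b * c, (a * b) * c]) = ⊤) := by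
  intro a b c
  have hNa : N a = -1 := by simp [N, dot, a]
  have hNb : N b = -1 := by simp [N, dot, b]
  have hNc : N c = -1 := by simp [N, dot, c]
  have hb1 : polarN b 1 = 0 := by simp [polarN_eq, dot, b, one_def]
  have hc1 : polarN c 1 = 0 := by simp [polarN_eq, dot, c, one_def]
  have hab : polarN a b = 0 := by simp [polarN_eq, dot, a, b]
  have hac : polarN a c = 0 := by simp [polarN_eq, dot, a, c]
  have hbc : polarN b c = 0 := by simp [polarN_eq, dot, b, c]
  have habc : polarN (a * b) c = 0 := by
    simp [polarN_eq, mul_a, mul_b, mul_alpha, mul_beta, dot, cross, a, b, c]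
  have ha1 : polarN a 1 = 1 := by simp [polarN_eq, dot, a, one_def]
  have hdisc : 4 * N a - polarN a 1 ^ 2 ≠ 0 := by
    rw [hNa, ha1, show (4 : k) * -1 - 1 ^ 2 = -5 by norm_num]
    exact neg_ne_zero.mpr h5
  let _ : NonAssocRing (Zorn k) := nonAssocRing
  have hli : LinearIndependent k ![1, a, b, a * b, c, a * c, b * c, a * b * c] :=
    isCompositionForm_normForm.linearIndependent_doubling_triple hb1 hc1 hab hac hbc habc
      (mem_nonZeroDivisors_of_ne_zero hdisc)
      (mem_nonZeroDivisors_of_ne_zero (hNb.trans_ne (neg_ne_zero.mpr one_ne_zero)))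
      (mem_nonZeroDivisors_of_ne_zero (hNc.trans_ne (neg_ne_zero.mpr one_ne_zero)))
  exact ⟨hNa, hNb, hNc, hb1, hc1, hab, hac, hbc, habc, ha1 ▸ one_ne_zero, hli,
    hli.span_eq_top_of_card_eq_finrank finrank_eq_eight.symm⟩

/-- The doubling triple `(a, b, c)` from Lemma 5 over `F₂`: the stated norm and bilinear
form identities hold, and `{1, a, b, ab, c, ac, bc, (ab)c}` is an `F₂`-basis. -/
theorem doubling_triple_F2 :
    let a : Zorn (ZMod 2) := ⟨0, ![1, 0, 0], ![1, 0, 0], 1⟩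
    let b : Zorn (ZMod 2) := ⟨0, ![0, 1, 0], ![0, 1, 0], 0⟩
    let c : Zorn (ZMod 2) := ⟨0, ![0, 0, 1], ![0, 0, 1], 0⟩
    N a = 1 ∧ N b = 1 ∧ N c = 1 ∧
    polarN b 1 = 0 ∧ polarN c 1 = 0 ∧ polarN a b = 0 ∧ polarN a c = 0 ∧
    polarN b c = 0 ∧ polarN (a * b) c = 0 ∧ polarN a 1 ≠ 0 ∧
    (LinearIndependent (ZMod 2)
        ![(1 : Zorn (ZMod 2)), a, b, a * b, c, a * c, b * c, (a * b) * c] ∧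
      Submodule.span (ZMod 2)
        (Set.range ![(1 : Zorn (ZMod 2)), a, b, a * b, c, a * c, b * c, (a * b) * c]) = ⊤) := by
  simpa only [CharTwo.neg_eq] using doubling_triple_F2_general (k := ZMod 2) (by decide)

end Zorn
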